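/- Let (T_i)_{i=1}^∞ be a submultiplicative sequence of bounded linear operators on a separable Banach space X. The following are equivalent: (1) (T_i) is densely mean Li-Yorke chaotic; (2) the set of mean Li-Yorke pairs is dense in X×X; (3) the set of absolutely mean semi-irregular vectors is dense in X; (4) the set of absolutely mean irregular vectors is residual in X; (5) the mean proximal relation MProx(T_i) is dense in X×X and (T_i) is mean sensitive; (6) the mean proximal cell MProx(T_i,0) is dense in X and there exists a vector x∈X with limsup_{n→∞} (1/n)∑_{i=1}^n ‖T_i x‖ > 0. -/

import Mathlib

open Filter Topology

variable {X Y : Type*} [NormedAddCommGroup X] [NormedSpace ℝ X]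
  [NormedAddCommGroup Y] [NormedSpace ℝ Y]

/-- The Cesàro average `(1/n) ∑_{i=1}^{n} ‖T i x - T i y‖`. -/
noncomputable def mavg (T : ℕ → X →L[ℝ] Y) (x y : X) (n : ℕ) : ℝ :=
  (∑ i ∈ Finset.Icc 1 n, ‖T i x - T i y‖) / n

/-- The Cesàro average `(1/n) ∑_{i=1}^{n} ‖T i x‖`. -/
noncomputable def avg (T : ℕ → X →L[ℝ] Y) (x : X) (n : ℕ) : ℝ :=
  (∑ i ∈ Finset.Icc 1 n, ‖T i x‖) / n

/-- `limsup_n (1/n) ∑_{i=1}^{n} ‖T i x - T i y‖`, computed in `EReal`. -/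
noncomputable def msup (T : ℕ → X →L[ℝ] Y) (x y : X) : EReal :=
  Filter.limsup (fun n => (mavg T x y n : EReal)) Filter.atTop

/-- `liminf_n (1/n) ∑_{i=1}^{n} ‖T i x - T i y‖`, computed in `EReal`. -/
noncomputable def minf (T : ℕ → X →L[ℝ] Y) (x y : X) : EReal :=
  Filter.liminf (fun n => (mavg T x y n : EReal)) Filter.atTop

/-- `limsup_n (1/n) ∑_{i=1}^{n} ‖T i x‖`, computed in `EReal`. -/
noncomputable def asup (T : ℕ → X →L[ℝ] Y) (x : X) : EReal :=
  Filter.limsup (fun n => (avg T x n : EReal)) Filter.atTop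

/-- `liminf_n (1/n) ∑_{i=1}^{n} ‖T i x‖`, computed in `EReal`. -/
noncomputable def ainf (T : ℕ → X →L[ℝ] Y) (x : X) : EReal :=
  Filter.liminf (fun n => (avg T x n : EReal)) Filter.atTop

/-- Mean sensitivity of the sequence `(T i)`. -/
def MeanSensitive (T : ℕ → X →L[ℝ] Y) : Prop :=
  ∃ δ : ℝ, 0 < δ ∧ ∀ x : X, ∀ ε : ℝ, 0 < ε →
    ∃ y : X, ‖x - y‖ < ε ∧ (δ : EReal) < msup T x y

/-- The sequence `(T i)` is submultiplicative: `‖T (i+m) z‖ ≤ C ‖T i (T m z)‖`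
for all `z` and all indices `i, m ≥ 1`. -/
def Submultiplicative (T : ℕ → X →L[ℝ] X) : Prop :=
  ∃ C : ℝ, 0 < C ∧ ∀ z : X, ∀ i m : ℕ, 1 ≤ i → 1 ≤ m →
    ‖T (i + m) z‖ ≤ C * ‖T i (T m z)‖

/-!
Pairs reduce to vectors, because `(x, y) ↦ x - y` is an open quotient map. Write `A_n x` for the
average `(1/n) ∑_{i=1}^{n} ‖T i x‖`, a continuous seminorm. If the vectors with `liminf A_n x = 0`
are dense, they form a dense `G_δ`. By the uniform boundedness argument, either `sup_n A_n x = ∞`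
for residually many `x`, or `A_n x ≤ L ‖x‖` for all `n` and `x`. In the latter case `A_n x → 0` on a
closed set of vectors, which contains every `x` with `liminf A_n x = 0`: such an `x` has some
`‖T m x‖` small, and by submultiplicativity `limsup A_n x ≤ C L ‖T m x‖`. So the second alternative
makes all the limsups vanish, and a single vector with positive limsup forces the first one. A
transfinite recursion of length `ω₁` then extracts a dense uncountable set with all nonzero
differences irregular.
-/

section Dense

variable {α : Type*} [TopologicalSpace α]

theorem dense_offDiag [T1Space α] [∀ x : α, (𝓝[≠] x).NeBot] {K : Set α} (hK : Dense K) :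
    Dense K.offDiag := by
  rw [dense_iff_inter_open]
  rintro W hW ⟨p, hp⟩
  obtain ⟨U, V, hU, hV, hpU, hpV, hUV⟩ := isOpen_prod_iff.1 hW p.1 p.2 hp
  obtain ⟨x, hxK, hxU⟩ := hK.exists_mem_open hU ⟨_, hpU⟩
  obtain ⟨y, ⟨hyK, hyx⟩, hyV⟩ := (hK.sdiff_singleton x).exists_mem_open hV ⟨_, hpV⟩
  exact ⟨(x, y), hUV ⟨hxU, hyV⟩, hxK, hyK, Ne.symm hyx⟩

theorem dense_setOf_of_pairwise [T1Space α] [ConnectedSpace α] {K : Set α} {R : α → α → Prop}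
    (hK : Dense K) (huncountable : ¬K.Countable) (hR : K.Pairwise R) :
    Dense {p : α × α | R p.1 p.2} := by
  have : Nontrivial α := by
    by_contra! h
    exact huncountable K.to_countable
  exact (dense_offDiag hK).mono fun p hp ↦ hR hp.1 hp.2.1 hp.2.2

theorem isOpenQuotientMap_sub {G : Type*} [AddGroup G] [TopologicalSpace G]
    [IsTopologicalAddGroup G] : IsOpenQuotientMap fun p : G × G ↦ p.1 - p.2 where
  surjective x := ⟨(x, 0), sub_zero x⟩
  continuous := continuous_sub
  isOpenMap := by
    convert isOpenMap_snd.comp ((((Homeomorph.neg G).prodCongr (Homeomorph.neg G)).trans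
      (Homeomorph.shearAddRight G).symm).isOpenMap)
    simp [sub_eq_add_neg]

end Dense

theorem exists_forall_of_forall_Iio {ι α : Type*} [Preorder ι] [WellFoundedLT ι]
    {P : (i : ι) → (Set.Iio i → α) → α → Prop} (h : ∀ i g, ∃ x, P i g x) :
    ∃ f : ι → α, ∀ i, P i (fun j ↦ f j) (f i) := by
  choose next hnext using h
  let step (i : ι) (f : ∀ j, j < i → α) : α := next i fun j ↦ f j j.2
  refine ⟨WellFoundedLT.fix step, fun i ↦ ?_⟩
  rw [WellFoundedLT.fix_eq step i]
  exact hnext i _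

theorem exists_nat_indexed_basis (α : Type*) [TopologicalSpace α] [SecondCountableTopology α]
    [Nonempty α] : ∃ b : ℕ → Set α, (∀ n, (b n).Nonempty) ∧
      TopologicalSpace.IsTopologicalBasis (Set.range b) := by
  obtain ⟨x⟩ := ‹Nonempty α›
  have hbasis := TopologicalSpace.isBasis_countableBasis α
  obtain ⟨s, hs, -⟩ := hbasis.exists_subset_of_mem_open (Set.mem_univ x) isOpen_univ
  obtain ⟨b, hb⟩ := (TopologicalSpace.countable_countableBasis α).exists_eq_range ⟨s, hs⟩
  refine ⟨b, fun n ↦ ?_, hb ▸ hbasis⟩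
  exact TopologicalSpace.nonempty_of_mem_countableBasis (hb ▸ Set.mem_range_self n)

theorem exists_denseRange_pairwise_of_countable_Iio {α ι : Type*} [TopologicalSpace α]
    [BaireSpace α] [SecondCountableTopology α] [Nonempty α] [LinearOrder ι] [WellFoundedLT ι]
    [Infinite ι] (hIio : ∀ i : ι, (Set.Iio i).Countable) {R : α → α → Prop}
    (hsymm : ∀ x y, R x y → R y x) (hR : ∀ a, ∀ᶠ x in residual α, R x a) :
    ∃ f : ι → α, DenseRange f ∧ Pairwise fun i j ↦ R (f i) (f j) := by
  obtain ⟨B, hB, hBbasis⟩ : ∃ B : ι → Set α, (∀ i, (B i).Nonempty) ∧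
      TopologicalSpace.IsTopologicalBasis (Set.range B) := by
    obtain ⟨b, hbne, hb⟩ := exists_nat_indexed_basis α
    let e := Function.invFun (Infinite.natEmbedding ι)
    have he : e.Surjective := Function.invFun_surjective (Infinite.natEmbedding ι).injective
    exact ⟨b ∘ e, fun i ↦ hbne _, he.range_comp b ▸ hb⟩
  -- Only countably many points precede stage `i`, so those related to all of them form a residual
  -- set, which meets `B i`.
  have hnext (i : ι) (g : Set.Iio i → α) : ∃ x, x ∈ B i ∧ ∀ j, R x (g j) := by
    have := (hIio i).to_subtype
    obtain ⟨x, hx, hxB⟩ := (dense_of_mem_residual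
      (eventually_countable_forall.2 fun j ↦ hR (g j))).exists_mem_open
        (hBbasis.isOpen (Set.mem_range_self i)) (hB i)
    exact ⟨x, hxB, hx⟩
  obtain ⟨f, hf⟩ := exists_forall_of_forall_Iio hnext
  refine ⟨f, hBbasis.dense_iff.2 ?_, fun i j hij ↦ ?_⟩
  · rintro _ ⟨i, rfl⟩ -
    exact ⟨f i, (hf i).1, i, rfl⟩
  · exact hij.lt_or_gt.elim (fun h ↦ hsymm _ _ ((hf j).2 ⟨i, h⟩)) fun h ↦ (hf i).2 ⟨j, h⟩

theorem exists_dense_not_countable_pairwise {α : Type*} [TopologicalSpace α] [BaireSpace α]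
    [SecondCountableTopology α] [Nonempty α] {R : α → α → Prop} (hirrefl : ∀ x, ¬R x x)
    (hsymm : ∀ x y, R x y → R y x) (hR : ∀ a, ∀ᶠ x in residual α, R x a) :
    ∃ K : Set α, Dense K ∧ ¬K.Countable ∧ K.Pairwise R := by
  let ι : Type := (Cardinal.aleph 1).ord.ToType
  have : Uncountable ι := by simp [← Cardinal.aleph0_lt_mk_iff, ι]
  have hIio (i : ι) : (Set.Iio i).Countable :=
    Cardinal.le_aleph0_iff_set_countable.1 <| Cardinal.lt_aleph_one_iff.1 <|
      (Cardinal.mk_Iio_lt i (by simp [ι])).trans_eq (by simp [ι])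
  obtain ⟨f, hdense, hpair⟩ := exists_denseRange_pairwise_of_countable_Iio hIio hsymm hR
  have hinj : f.Injective := fun i j hij ↦ by
    by_contra hne
    exact hirrefl (f j) (by simpa [hij] using hpair hne)
  refine ⟨Set.range f, hdense, fun h ↦ ?_, ?_⟩
  · have := h.to_subtype
    exact not_countable ((Equiv.ofInjective f hinj).countable_iff.2 this)
  · rintro _ ⟨i, rfl⟩ _ ⟨j, rfl⟩ hij
    exact hpair (mt (congrArg f) hij)

section Seminorm

variable {𝕜 E ι : Type*} [NontriviallyNormedField 𝕜] [NormedAddCommGroup E] [NormedSpace 𝕜 E]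

theorem dense_setOf_exists_lt_seminorm {p : ι → Seminorm 𝕜 E}
    (hp : ¬∃ L : ℝ, ∀ i x, p i x ≤ L * ‖x‖) (M : ℝ) : Dense {x | ∃ i, M < p i x} := by
  by_contra hdense
  obtain ⟨x₀, r, hr, hball⟩ : ∃ x₀ : E, ∃ r > 0, ∀ x ∈ Metric.ball x₀ r, ∀ i, p i x ≤ M := by
    simpa [Metric.dense_iff, Set.not_nonempty_iff_eq_empty, Set.eq_empty_iff_forall_notMem]
      using hdense
  have hball₀ (i : ι) (z : E) (hz : ‖z‖ < r) : p i z ≤ 2 * M := by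
    have hz' : p i (x₀ + z) ≤ M := hball _ (by simpa using hz) i
    have hx₀ : p i x₀ ≤ M := hball _ (Metric.mem_ball_self hr) i
    have := map_sub_le_add (p i) (x₀ + z) x₀
    rw [add_sub_cancel_left] at this
    linarith
  obtain ⟨c, hc⟩ := NormedField.exists_one_lt_norm 𝕜
  refine hp ⟨2 * M / (r / ‖c‖), fun i x ↦ ?_⟩
  obtain rfl | hx := eq_or_ne x 0
  · simp
  refine Seminorm.bound_of_shell (normSeminorm 𝕜 E) (p i) hr hc (fun z hzr hz ↦ ?_)
    (norm_ne_zero_iff.2 hx)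
  simp only [coe_normSeminorm] at hzr hz ⊢
  have := (apply_nonneg (p i) z).trans (hball₀ i z hz)
  rw [div_mul_eq_mul_div, le_div_iff₀ (by positivity)]
  gcongr
  exact hball₀ i z hz

end Seminorm

section Limsup

variable {ι : Type*} {l : Filter ι} {u : ι → ℝ}

theorem liminf_coe_eq_zero_iff (hu : ∀ i, 0 ≤ u i) :
    liminf (fun i ↦ (u i : EReal)) l = 0 ↔ ∀ ε > 0, ∃ᶠ i in l, u i < ε := by
  have hnonneg : 0 ≤ liminf (fun i ↦ (u i : EReal)) l :=
    le_liminf_of_le (h := .of_forall fun i ↦ EReal.coe_nonneg.2 (hu i))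
  refine ⟨fun h ε hε ↦ ?_, fun h ↦ hnonneg.antisymm' ?_⟩
  · have hlt : liminf (fun i ↦ (u i : EReal)) l < ε := h ▸ EReal.coe_pos.2 hε
    exact (frequently_lt_of_liminf_lt (h := hlt)).mono fun i ↦ EReal.coe_lt_coe_iff.1
  · refine EReal.le_of_forall_lt_iff_le.1 fun ε hε ↦ ?_
    exact liminf_le_of_frequently_le
      ((h ε (EReal.coe_pos.1 hε)).mono fun i hi ↦ EReal.coe_le_coe_iff.2 hi.le)

theorem limsup_coe_eq_zero_iff_tendsto [l.NeBot] (hu : ∀ i, 0 ≤ u i) :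
    limsup (fun i ↦ (u i : EReal)) l = 0 ↔ Tendsto u l (𝓝 0) := by
  rw [← EReal.tendsto_coe]
  refine ⟨fun h ↦ ?_, fun h ↦ h.limsup_eq⟩
  exact tendsto_of_le_liminf_of_limsup_le
    (le_liminf_of_le (h := .of_forall fun i ↦ EReal.coe_nonneg.2 (hu i))) h.le

theorem limsup_coe_eq_top_iff {u : ℕ → ℝ} :
    limsup (fun n ↦ (u n : EReal)) atTop = ⊤ ↔ ¬BddAbove (Set.range u) := by
  rw [← not_iff_not, not_not, ← ne_eq, ← lt_top_iff_ne_top]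
  refine ⟨fun h ↦ ?_, fun ⟨M, hM⟩ ↦ ?_⟩
  · obtain ⟨M, hM, -⟩ := EReal.lt_iff_exists_real_btwn.1 h
    exact IsBoundedUnder.bddAbove_range
      ⟨M, (eventually_lt_of_limsup_lt hM).mono fun n hn ↦ EReal.coe_le_coe_iff.1 hn.le⟩
  · refine (limsup_le_of_le (h := .of_forall fun n ↦ ?_)).trans_lt (EReal.coe_lt_top M)
    exact EReal.coe_le_coe_iff.2 (hM (Set.mem_range_self n))

end Limsup

section Cesaro

variable {T : ℕ → X →L[ℝ] Y} {x y : X}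

theorem mavg_eq_avg_sub : mavg T x y = avg T (x - y) := by
  ext n
  simp [mavg, avg]

theorem msup_eq_asup_sub : msup T x y = asup T (x - y) := by
  rw [msup, mavg_eq_avg_sub, asup]

theorem minf_eq_ainf_sub : minf T x y = ainf T (x - y) := by
  rw [minf, mavg_eq_avg_sub, ainf]

variable (T) in
/-- The Cesàro average `x ↦ (1/n) ∑_{i=1}^{n} ‖T i x‖` as a seminorm in `x`; it is zero for
`n = 0`, where the division by `n` has junk value `0`. -/
noncomputable def avgSeminorm (n : ℕ) : Seminorm ℝ X :=
  .of (avg T · n)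
    (fun x y ↦ by
      simp only [avg, map_add]
      rw [← add_div, ← Finset.sum_add_distrib]
      gcongr
      exact norm_add_le _ _)
    (fun c x ↦ by simp [avg, norm_smul, ← Finset.mul_sum, mul_div_assoc])

theorem avg_nonneg (n : ℕ) : 0 ≤ avg T x n :=
  apply_nonneg (avgSeminorm T n) x

theorem avg_neg : avg T (-x) = avg T x :=
  funext fun n ↦ map_neg_eq_map (avgSeminorm T n) x

theorem continuous_avg (n : ℕ) : Continuous (avg T · n) := by
  unfold avg
  fun_prop

theorem ainf_eq_zero_iff : ainf T x = 0 ↔ ∀ ε > 0, ∃ᶠ n in atTop, avg T x n < ε :=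
  liminf_coe_eq_zero_iff avg_nonneg

theorem asup_eq_zero_iff_tendsto : asup T x = 0 ↔ Tendsto (avg T x) atTop (𝓝 0) :=
  limsup_coe_eq_zero_iff_tendsto avg_nonneg

theorem asup_eq_top_iff : asup T x = ⊤ ↔ ¬BddAbove (Set.range (avg T x)) :=
  limsup_coe_eq_top_iff

theorem asup_zero : asup T 0 = 0 := by
  simp [asup, avg]

theorem ainf_neg : ainf T (-x) = ainf T x := by
  rw [ainf, avg_neg, ainf]

theorem asup_neg : asup T (-x) = asup T x := by
  rw [asup, avg_neg, asup]

theorem exists_norm_lt_of_ainf_eq_zero (hx : ainf T x = 0) {ε : ℝ} (hε : 0 < ε) :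
    ∃ m ≥ 1, ‖T m x‖ < ε := by
  obtain ⟨n, hn, havg⟩ := frequently_atTop.1 (ainf_eq_zero_iff.1 hx ε hε) 1
  by_contra! hge
  have hsum : n • ε ≤ ∑ i ∈ Finset.Icc 1 n, ‖T i x‖ := by
    simpa using Finset.card_nsmul_le_sum (Finset.Icc 1 n) (‖T · x‖) ε
      fun i hi ↦ hge i (Finset.mem_Icc.1 hi).1
  rw [avg, div_lt_iff₀ (by positivity)] at havg
  rw [nsmul_eq_mul] at hsum
  linarith

theorem eventually_residual_ainf_eq_zero (hT : Dense {x : X | ainf T x = 0}) :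
    ∀ᶠ x in residual X, ainf T x = 0 := by
  have hopen (k N : ℕ) : ∀ᶠ x in residual X, ∃ n ≥ N, avg T x n < 1 / (k + 1) := by
    refine residual_of_dense_open ?_ (hT.mono fun x hx ↦
      frequently_atTop.1 (ainf_eq_zero_iff.1 hx _ Nat.one_div_pos_of_nat) N)
    simp only [Set.ofPred_exists, Set.ofPred_and]
    exact isOpen_iUnion fun n ↦ isOpen_const.inter (isOpen_lt (continuous_avg n) continuous_const)
  filter_upwards [eventually_countable_forall.2 fun k ↦ eventually_countable_forall.2 (hopen k)]
    with x hx
  refine ainf_eq_zero_iff.2 fun ε hε ↦ ?_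
  obtain ⟨k, hk⟩ := exists_nat_one_div_lt hε
  exact (frequently_atTop.2 (hx k)).mono fun n hn ↦ hn.trans hk

theorem MeanSensitive.exists_asup_pos (hT : MeanSensitive T) : ∃ x, 0 < asup T x := by
  obtain ⟨δ, hδ, hsens⟩ := hT
  obtain ⟨y, -, hy⟩ := hsens 0 1 one_pos
  rw [msup_eq_asup_sub] at hy
  exact ⟨0 - y, (EReal.coe_pos.2 hδ).trans hy⟩

theorem meanSensitive_of_dense_asup_eq_top (hT : Dense {x : X | asup T x = ⊤}) :
    MeanSensitive T := by
  refine ⟨1, one_pos, fun x ε hε ↦ ?_⟩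
  obtain ⟨z, hz, hdist⟩ := hT.exists_dist_lt 0 hε
  refine ⟨x - z, by simpa using hdist, ?_⟩
  rw [msup_eq_asup_sub, sub_sub_cancel, hz]
  exact EReal.coe_lt_top 1

variable (T) in
/-- Absolute Cesàro boundedness: the averages `(1/n) ∑_{i=1}^{n} ‖T i x‖` are at most `L ‖x‖`,
with `L` independent of `n` and `x`. -/
def AbsolutelyCesaroBounded : Prop :=
  ∃ L : ℝ, ∀ n x, avg T x n ≤ L * ‖x‖

theorem eventually_residual_asup_eq_top (hT : ¬AbsolutelyCesaroBounded T) :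
    ∀ᶠ x in residual X, asup T x = ⊤ := by
  have hopen (k : ℕ) : ∀ᶠ x in residual X, ∃ n, k < avg T x n := by
    refine residual_of_dense_open ?_ (dense_setOf_exists_lt_seminorm (p := avgSeminorm T) hT k)
    simp only [Set.ofPred_exists]
    exact isOpen_iUnion fun n ↦ isOpen_lt continuous_const (continuous_avg n)
  filter_upwards [eventually_countable_forall.2 hopen] with x hx
  rw [asup_eq_top_iff]
  rintro ⟨M, hM⟩
  obtain ⟨k, hk⟩ := exists_nat_gt M
  obtain ⟨n, hn⟩ := hx k
  exact (hk.trans hn).not_ge (hM (Set.mem_range_self n))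

theorem AbsolutelyCesaroBounded.isClosed_setOf_asup_eq_zero (hT : AbsolutelyCesaroBounded T) :
    IsClosed {x : X | asup T x = 0} := by
  obtain ⟨L, hL⟩ := hT
  have hlipschitz (n : ℕ) : LipschitzWith L.toNNReal (avg T · n) := .of_dist_le' fun x y ↦ by
    rw [dist_eq_norm x]
    exact ((avgSeminorm T n).norm_sub_map_le_sub x y).trans (hL n (x - y))
  have hequi := (LipschitzWith.uniformEquicontinuous _ _ hlipschitz).equicontinuous
  simp only [asup_eq_zero_iff_tendsto]
  exact hequi.isClosed_setOfPred_tendsto continuous_const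

end Cesaro

section Submultiplicative

theorem sum_Icc_one_add {M : Type*} [AddCommMonoid M] (f : ℕ → M) (m n : ℕ) :
    ∑ i ∈ Finset.Icc 1 (m + n), f i =
      ∑ i ∈ Finset.Icc 1 m, f i + ∑ i ∈ Finset.Icc 1 n, f (i + m) := by
  simp only [← Finset.Ico_add_one_right_eq_Icc]
  rw [Finset.sum_Ico_add' f, add_comm 1 m, add_right_comm n, add_comm n m,
    Finset.sum_Ico_consecutive f (by lia) (by lia)]

variable {T : ℕ → X →L[ℝ] X} {x : X}

theorem Submultiplicative.exists_avg_le (hsub : Submultiplicative T) :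
    ∃ C > 0, ∀ (x : X) (m n : ℕ), 1 ≤ m →
      avg T x n ≤ (∑ i ∈ Finset.Icc 1 m, ‖T i x‖) / n + C * avg T (T m x) n := by
  obtain ⟨C, hC, hmul⟩ := hsub
  refine ⟨C, hC, fun x m n hm ↦ ?_⟩
  rw [avg, avg, mul_div_assoc', ← add_div]
  gcongr
  calc ∑ i ∈ Finset.Icc 1 n, ‖T i x‖
      ≤ ∑ i ∈ Finset.Icc 1 (m + n), ‖T i x‖ := by
        gcongr
        exact Nat.le_add_left n m
    _ = ∑ i ∈ Finset.Icc 1 m, ‖T i x‖ + ∑ i ∈ Finset.Icc 1 n, ‖T (i + m) x‖ :=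
        sum_Icc_one_add (‖T · x‖) m n
    _ ≤ ∑ i ∈ Finset.Icc 1 m, ‖T i x‖ + C * ∑ i ∈ Finset.Icc 1 n, ‖T i (T m x)‖ := by
        rw [Finset.mul_sum]
        gcongr with i hi
        exact hmul x i m (Finset.mem_Icc.1 hi).1 hm

theorem Submultiplicative.asup_eq_zero_of_ainf_eq_zero (hsub : Submultiplicative T)
    (hT : AbsolutelyCesaroBounded T) (hx : ainf T x = 0) : asup T x = 0 := by
  obtain ⟨C, hC, hshift⟩ := hsub.exists_avg_le
  obtain ⟨L, hL⟩ := hT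
  refine asup_eq_zero_iff_tendsto.2 (tendsto_order.2 ⟨fun a ha ↦ ?_, fun ε hε ↦ ?_⟩)
  · exact .of_forall fun n ↦ ha.trans_le (avg_nonneg n)
  obtain ⟨δ, hδ, hδε⟩ := exists_pos_mul_lt hε (C * |L|)
  obtain ⟨m, hm, hmx⟩ := exists_norm_lt_of_ainf_eq_zero hx hδ
  have hlim : Tendsto (fun n : ℕ ↦ (∑ i ∈ Finset.Icc 1 m, ‖T i x‖) / n + C * |L| * δ) atTop
      (𝓝 (C * |L| * δ)) := by
    simpa using (tendsto_const_div_atTop_nhds_zero_nat _).add_const (C * |L| * δ)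
  filter_upwards [hlim.eventually_lt_const hδε] with n hn
  have havg : avg T (T m x) n ≤ |L| * δ := by
    grw [hL n (T m x), le_abs_self L, hmx]
  grw [hshift x m n hm, havg, ← mul_assoc]
  exact hn

theorem Submultiplicative.asup_eq_zero (hsub : Submultiplicative T)
    (hT : AbsolutelyCesaroBounded T) (hdense : Dense {x : X | ainf T x = 0}) (x : X) :
    asup T x = 0 :=
  (hT.isClosed_setOf_asup_eq_zero.closure_eq ▸
    (hdense.mono fun _ hy ↦ hsub.asup_eq_zero_of_ainf_eq_zero hT hy) x :)

theorem Submultiplicative.eventually_residual_irregular (hsub : Submultiplicative T)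
    (hdense : Dense {x : X | ainf T x = 0}) (hpos : ∃ x, 0 < asup T x) :
    ∀ᶠ x in residual X, ainf T x = 0 ∧ asup T x = ⊤ := by
  obtain ⟨x, hx⟩ := hpos
  have hunbdd : ¬AbsolutelyCesaroBounded T := fun hT ↦
    hx.ne' (hsub.asup_eq_zero hT hdense x)
  exact (eventually_residual_ainf_eq_zero hdense).and (eventually_residual_asup_eq_top hunbdd)

end Submultiplicative

theorem tfae_dense_meanLiYorke_pairs_of_submultiplicative [BaireSpace X]
    (T : ℕ → X →L[ℝ] X) (hsub : Submultiplicative T) :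
    List.TFAE [
      Dense {p : X × X | minf T p.1 p.2 = 0 ∧ 0 < msup T p.1 p.2},
      Dense {x : X | ainf T x = 0 ∧ 0 < asup T x},
      {x : X | ainf T x = 0 ∧ asup T x = ⊤} ∈ residual X,
      Dense {p : X × X | minf T p.1 p.2 = 0} ∧ MeanSensitive T,
      Dense {x : X | ainf T x = 0} ∧ ∃ x : X, 0 < asup T x] := by
  have hpairs (S : Set X) : Dense {p : X × X | p.1 - p.2 ∈ S} ↔ Dense S :=
    isOpenQuotientMap_sub.dense_preimage_iff
  simp only [minf_eq_ainf_sub, msup_eq_asup_sub]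
  tfae_have 1 ↔ 2 := hpairs {x | ainf T x = 0 ∧ 0 < asup T x}
  tfae_have 2 → 5 := fun h ↦ ⟨h.mono fun _ ↦ And.left, h.nonempty.imp fun _ ↦ And.right⟩
  tfae_have 5 → 3 := fun h ↦ hsub.eventually_residual_irregular h.1 h.2
  tfae_have 3 → 2 := fun h ↦ (dense_of_mem_residual h).mono fun _ ↦
    And.imp_right fun htop ↦ EReal.zero_lt_top.trans_eq (Eq.symm htop)
  tfae_have 3 → 4 := fun h ↦
    have hdense := dense_of_mem_residual h
    ⟨(hpairs {x | ainf T x = 0}).2 (hdense.mono fun _ ↦ And.left),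
      meanSensitive_of_dense_asup_eq_top (hdense.mono fun _ ↦ And.right)⟩
  tfae_have 4 → 5 := fun h ↦ ⟨(hpairs {x | ainf T x = 0}).1 h.1, h.2.exists_asup_pos⟩
  tfae_finish

theorem exists_dense_meanLiYorke_set_of_residual [BaireSpace X] [TopologicalSpace.SeparableSpace X]
    {T : ℕ → X →L[ℝ] Y} (hT : ∀ᶠ x in residual X, ainf T x = 0 ∧ asup T x = ⊤) :
    ∃ K : Set X, Dense K ∧ ¬K.Countable ∧
      K.Pairwise fun x y ↦ minf T x y = 0 ∧ msup T x y = ⊤ := by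
  have : SecondCountableTopology X := UniformSpace.secondCountable_of_separable X
  simp only [minf_eq_ainf_sub, msup_eq_asup_sub]
  refine exists_dense_not_countable_pairwise
    (R := fun x y ↦ ainf T (x - y) = 0 ∧ asup T (x - y) = ⊤) (fun x h ↦ ?_)
    (fun x y h ↦ ?_) fun a ↦ ?_
  · rw [sub_self, asup_zero] at h
    exact EReal.zero_ne_top h.2
  · rwa [← neg_sub, ainf_neg, asup_neg]
  · have htranslate : Tendsto (· - a) (residual X) (residual X) :=
      tendsto_residual_of_isOpenMap (continuous_sub_right a) (isOpenMap_sub_right a)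
    exact htranslate.eventually hT

theorem denselyMeanLiYorkeChaotic_tfae_of_submultiplicative_general
    [BaireSpace X] [TopologicalSpace.SeparableSpace X]
    (T : ℕ → X →L[ℝ] X) (hsub : Submultiplicative T) :
    List.TFAE [
      ∃ K : Set X, Dense K ∧ ¬ K.Countable ∧
        ∀ x ∈ K, ∀ y ∈ K, x ≠ y → (minf T x y = 0 ∧ 0 < msup T x y),
      Dense {p : X × X | minf T p.1 p.2 = 0 ∧ 0 < msup T p.1 p.2},
      Dense {x : X | ainf T x = 0 ∧ 0 < asup T x},
      {x : X | ainf T x = 0 ∧ asup T x = ⊤} ∈ residual X,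
      Dense {p : X × X | minf T p.1 p.2 = 0} ∧ MeanSensitive T,
      Dense {x : X | ainf T x = 0} ∧ ∃ x : X, 0 < asup T x] := by
  have htfae := tfae_dense_meanLiYorke_pairs_of_submultiplicative T hsub
  refine (List.tfae_cons_cons).2 ⟨⟨fun ⟨K, hK, hcount, hpair⟩ ↦ ?_, fun hpairs ↦ ?_⟩, htfae⟩
  · exact dense_setOf_of_pairwise hK hcount fun x hx y hy ↦ hpair x hx y hy
  · obtain ⟨K, hK, hcount, hpair⟩ :=
      exists_dense_meanLiYorke_set_of_residual ((htfae.out 0 2).1 hpairs)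
    exact ⟨K, hK, hcount, fun x hx y hy hxy ↦
      (hpair hx hy hxy).imp_right fun htop ↦ EReal.zero_lt_top.trans_eq (Eq.symm htop)⟩

/-- **Characterizations of dense mean Li-Yorke chaos** for a submultiplicative
sequence of bounded linear operators on a separable Banach space. -/
theorem denselyMeanLiYorkeChaotic_tfae_of_submultiplicative
    [CompleteSpace X] [TopologicalSpace.SeparableSpace X]
    (T : ℕ → X →L[ℝ] X) (hsub : Submultiplicative T) :
    List.TFAE [
      ∃ K : Set X, Dense K ∧ ¬ K.Countable ∧
        ∀ x ∈ K, ∀ y ∈ K, x ≠ y → (minf T x y = 0 ∧ 0 < msup T x y),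
      Dense {p : X × X | minf T p.1 p.2 = 0 ∧ 0 < msup T p.1 p.2},
      Dense {x : X | ainf T x = 0 ∧ 0 < asup T x},
      {x : X | ainf T x = 0 ∧ asup T x = ⊤} ∈ residual X,
      Dense {p : X × X | minf T p.1 p.2 = 0} ∧ MeanSensitive T,
      Dense {x : X | ainf T x = 0} ∧ ∃ x : X, 0 < asup T x] :=
  denselyMeanLiYorkeChaotic_tfae_of_submultiplicative_general T hsub
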